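/- Let (η, ϕ) be a smooth solution of the three-dimensional water-wave system on [0,T], and set A := 3∫₀ᵀ∬_Q η·∂ₜψ dx dt + 2g∫₀ᵀ∬_Q η² dx dt + (1/2)∫₀ᵀ∭_{Ω(t)} |∇_{x,y}ϕ|² dy dx dt. Then A = −(T/2)·𝓗 + (3/4)[∬_Q η ψ dx]ₜ₌₀^{t=T} − (9/8)∫₀ᵀ∬_Q η(t,x)·|∇ₓϕ(t,x,−h)|² dx dt + (9/4)∫₀ᵀ∭_{Ω(t)} (∂_yϕ)·(∇η·∇ₓϕ) dy dx dt, where 𝓗 := 𝓗(0) (the energy 𝓗(t) being independent of t) and [F(t)]ₜ₌₀^{t=T} denotes F(T) − F(0). -/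

import Mathlib

open Real Set MeasureTheory

noncomputable section

/-- `∂_{x₁}ϕ(t,x₁,x₂,y)` -/
def phiX1 (ϕ : ℝ → ℝ → ℝ → ℝ → ℝ) (t x₁ x₂ y : ℝ) : ℝ := deriv (fun s => ϕ t s x₂ y) x₁

/-- `∂_{x₂}ϕ(t,x₁,x₂,y)` -/
def phiX2 (ϕ : ℝ → ℝ → ℝ → ℝ → ℝ) (t x₁ x₂ y : ℝ) : ℝ := deriv (fun s => ϕ t x₁ s y) x₂

/-- `∂_yϕ(t,x₁,x₂,y)` -/
def phiY3 (ϕ : ℝ → ℝ → ℝ → ℝ → ℝ) (t x₁ x₂ y : ℝ) : ℝ := deriv (fun s => ϕ t x₁ x₂ s) y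

/-- `∂ₜϕ(t,x₁,x₂,y)` -/
def phiT3 (ϕ : ℝ → ℝ → ℝ → ℝ → ℝ) (t x₁ x₂ y : ℝ) : ℝ := deriv (fun s => ϕ s x₁ x₂ y) t

/-- `|∇_{x,y}ϕ|²(t,x₁,x₂,y)` -/
def gradSq3 (ϕ : ℝ → ℝ → ℝ → ℝ → ℝ) (t x₁ x₂ y : ℝ) : ℝ :=
  (phiX1 ϕ t x₁ x₂ y) ^ 2 + (phiX2 ϕ t x₁ x₂ y) ^ 2 + (phiY3 ϕ t x₁ x₂ y) ^ 2

/-- `|∇ₓϕ|²(t,x₁,x₂,y)` (horizontal gradient) -/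
def gradXSq3 (ϕ : ℝ → ℝ → ℝ → ℝ → ℝ) (t x₁ x₂ y : ℝ) : ℝ :=
  (phiX1 ϕ t x₁ x₂ y) ^ 2 + (phiX2 ϕ t x₁ x₂ y) ^ 2

/-- `∂_{x₁}η(t,x₁,x₂)` -/
def etaX1 (η : ℝ → ℝ → ℝ → ℝ) (t x₁ x₂ : ℝ) : ℝ := deriv (fun s => η t s x₂) x₁

/-- `∂_{x₂}η(t,x₁,x₂)` -/
def etaX2 (η : ℝ → ℝ → ℝ → ℝ) (t x₁ x₂ : ℝ) : ℝ := deriv (fun s => η t x₁ s) x₂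

/-- `∂ₜη(t,x₁,x₂)` -/
def etaT3 (η : ℝ → ℝ → ℝ → ℝ) (t x₁ x₂ : ℝ) : ℝ := deriv (fun s => η s x₁ x₂) t

/-- the trace `ψ(t,x) = ϕ(t,x,η(t,x))` -/
def psi3 (η : ℝ → ℝ → ℝ → ℝ) (ϕ : ℝ → ℝ → ℝ → ℝ → ℝ) (t x₁ x₂ : ℝ) : ℝ :=
  ϕ t x₁ x₂ (η t x₁ x₂)

/-- `∂ₜψ(t,x₁,x₂)` -/
def psi3T (η : ℝ → ℝ → ℝ → ℝ) (ϕ : ℝ → ℝ → ℝ → ℝ → ℝ) (t x₁ x₂ : ℝ) : ℝ :=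
  deriv (fun s => psi3 η ϕ s x₁ x₂) t

/-- `∂_{x₁}ψ(t,x₁,x₂)` -/
def psi3X1 (η : ℝ → ℝ → ℝ → ℝ) (ϕ : ℝ → ℝ → ℝ → ℝ → ℝ) (t x₁ x₂ : ℝ) : ℝ :=
  deriv (fun s => psi3 η ϕ t s x₂) x₁

/-- `∂_{x₂}ψ(t,x₁,x₂)` -/
def psi3X2 (η : ℝ → ℝ → ℝ → ℝ) (ϕ : ℝ → ℝ → ℝ → ℝ → ℝ) (t x₁ x₂ : ℝ) : ℝ :=
  deriv (fun s => psi3 η ϕ t x₁ s) x₂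

/-- `Θ(t,x) = -η ∂ₜψ - (g/2) η²` -/
def Theta3 (g : ℝ) (η : ℝ → ℝ → ℝ → ℝ) (ϕ : ℝ → ℝ → ℝ → ℝ → ℝ) (t x₁ x₂ : ℝ) : ℝ :=
  -(η t x₁ x₂) * psi3T η ϕ t x₁ x₂ - g / 2 * (η t x₁ x₂) ^ 2

/-- the energy `𝓗(t)` -/
def energy3D (L₁ L₂ h g : ℝ) (η : ℝ → ℝ → ℝ → ℝ) (ϕ : ℝ → ℝ → ℝ → ℝ → ℝ) (t : ℝ) : ℝ :=
  g / 2 * (∫ x₁ in (0:ℝ)..L₁, ∫ x₂ in (0:ℝ)..L₂, (η t x₁ x₂) ^ 2)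
    + 1 / 2 * ∫ x₁ in (0:ℝ)..L₁, ∫ x₂ in (0:ℝ)..L₂, ∫ y in (-h)..(η t x₁ x₂),
        gradSq3 ϕ t x₁ x₂ y

/-- the boundary observation `𝓑(T)` -/
def bigB (L₁ L₂ g T : ℝ) (η : ℝ → ℝ → ℝ → ℝ) (ϕ : ℝ → ℝ → ℝ → ℝ → ℝ) : ℝ :=
  ∫ t in (0:ℝ)..T,
    (L₁ * (∫ x₂ in (0:ℝ)..L₂, Theta3 g η ϕ t L₁ x₂)
      + L₂ * ∫ x₁ in (0:ℝ)..L₁, Theta3 g η ϕ t x₁ L₂)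

/-- the positive boundary term `P` -/
def bigP (L₁ L₂ h T : ℝ) (η : ℝ → ℝ → ℝ → ℝ) (ϕ : ℝ → ℝ → ℝ → ℝ → ℝ) : ℝ :=
  1 / 2 * ∫ t in (0:ℝ)..T,
    (L₁ * (∫ x₂ in (0:ℝ)..L₂, ∫ y in (-h)..(η t L₁ x₂), gradSq3 ϕ t L₁ x₂ y)
      + L₂ * (∫ x₁ in (0:ℝ)..L₁, ∫ y in (-h)..(η t x₁ L₂), gradSq3 ϕ t x₁ L₂ y)
      + h * ∫ x₁ in (0:ℝ)..L₁, ∫ x₂ in (0:ℝ)..L₂, gradSq3 ϕ t x₁ x₂ (-h))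

/-- A smooth solution of the three-dimensional water-wave system on `[0,T]`,
in the tank over `Q = [0,L₁] × [0,L₂]`. -/
structure IsWW3D (L₁ L₂ h g T : ℝ) (η : ℝ → ℝ → ℝ → ℝ)
    (ϕ : ℝ → ℝ → ℝ → ℝ → ℝ) : Prop where
  smooth_eta : ContDiff ℝ (⊤ : ℕ∞) (fun p : ℝ × ℝ × ℝ => η p.1 p.2.1 p.2.2)
  smooth_phi : ContDiff ℝ (⊤ : ℕ∞) (fun p : ℝ × ℝ × ℝ × ℝ => ϕ p.1 p.2.1 p.2.2.1 p.2.2.2)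
  eta_lower : ∀ t ∈ Icc (0:ℝ) T, ∀ x₁ ∈ Icc (0:ℝ) L₁, ∀ x₂ ∈ Icc (0:ℝ) L₂,
    -h / 2 ≤ η t x₁ x₂
  eta_mean : ∀ t ∈ Icc (0:ℝ) T,
    (∫ x₁ in (0:ℝ)..L₁, ∫ x₂ in (0:ℝ)..L₂, η t x₁ x₂) = 0
  laplace : ∀ t ∈ Icc (0:ℝ) T, ∀ x₁ ∈ Icc (0:ℝ) L₁, ∀ x₂ ∈ Icc (0:ℝ) L₂,
    ∀ y ∈ Icc (-h) (η t x₁ x₂),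
      deriv (fun s => phiX1 ϕ t s x₂ y) x₁ + deriv (fun s => phiX2 ϕ t x₁ s y) x₂
        + deriv (fun s => phiY3 ϕ t x₁ x₂ s) y = 0
  bc_x1 : ∀ t ∈ Icc (0:ℝ) T, ∀ x₁ ∈ ({0, L₁} : Set ℝ), ∀ x₂ ∈ Icc (0:ℝ) L₂,
    ∀ y ∈ Icc (-h) (η t x₁ x₂), phiX1 ϕ t x₁ x₂ y = 0
  bc_x2 : ∀ t ∈ Icc (0:ℝ) T, ∀ x₂ ∈ ({0, L₂} : Set ℝ), ∀ x₁ ∈ Icc (0:ℝ) L₁,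
    ∀ y ∈ Icc (-h) (η t x₁ x₂), phiX2 ϕ t x₁ x₂ y = 0
  bc_bottom : ∀ t ∈ Icc (0:ℝ) T, ∀ x₁ ∈ Icc (0:ℝ) L₁, ∀ x₂ ∈ Icc (0:ℝ) L₂,
    phiY3 ϕ t x₁ x₂ (-h) = 0
  kinematic : ∀ t ∈ Icc (0:ℝ) T, ∀ x₁ ∈ Icc (0:ℝ) L₁, ∀ x₂ ∈ Icc (0:ℝ) L₂,
    etaT3 η t x₁ x₂
      = phiY3 ϕ t x₁ x₂ (η t x₁ x₂)
        - (etaX1 η t x₁ x₂ * phiX1 ϕ t x₁ x₂ (η t x₁ x₂)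
            + etaX2 η t x₁ x₂ * phiX2 ϕ t x₁ x₂ (η t x₁ x₂))
  bernoulli : ∀ t ∈ Icc (0:ℝ) T, ∀ x₁ ∈ Icc (0:ℝ) L₁, ∀ x₂ ∈ Icc (0:ℝ) L₂,
    phiT3 ϕ t x₁ x₂ (η t x₁ x₂)
      + 1 / 2 * ((phiX1 ϕ t x₁ x₂ (η t x₁ x₂)) ^ 2
          + (phiX2 ϕ t x₁ x₂ (η t x₁ x₂)) ^ 2 + (phiY3 ϕ t x₁ x₂ (η t x₁ x₂)) ^ 2)
      + g * η t x₁ x₂ = 0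
  etaX1_bc : ∀ t ∈ Icc (0:ℝ) T, ∀ x₁ ∈ ({0, L₁} : Set ℝ), ∀ x₂ ∈ Icc (0:ℝ) L₂,
    etaX1 η t x₁ x₂ = 0
  etaX2_bc : ∀ t ∈ Icc (0:ℝ) T, ∀ x₂ ∈ ({0, L₂} : Set ℝ), ∀ x₁ ∈ Icc (0:ℝ) L₁,
    etaX2 η t x₁ x₂ = 0

/-!
The identity combines three others, each integrated over `[0,T]`: conservation of the energy `𝓗`,
with weight `-1/2`; the virial identity `d/dt ∬ ηψ = ∭ |∇ϕ|² + ∬ η ∂ₜψ`, with weight `3/4`; and,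
with weight `9/4`, the Rellich-type identity
`∭ ∂_yϕ (∇η·∇ₓϕ) = ∬ η ∂ₜψ + g ∬ η² + (1/2) ∬ η |∇ₓϕ(·,-h)|²`.
The first two rest on Green's formula `∭ ∇f·∇ϕ = ∬ (∂ₜη) f(·,η)`, for `f = ∂ₜϕ` and `f = ϕ`. The
third is the divergence theorem for the field `η (∂_yϕ ∇ₓϕ, (1/2)((∂_yϕ)² - |∇ₓϕ|²))`, whose flux
through the surface the Bernoulli condition turns into `∬ η (∂ₜψ + gη)`.
-/

section TwoVariableCalculus

variable {E F : Type*} [NormedAddCommGroup E] [NormedSpace ℝ E]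
  [NormedAddCommGroup F] [NormedSpace ℝ F]

lemma contDiff_deriv_param {f : E → ℝ → F} {g : E → ℝ} {m n : WithTop ℕ∞}
    (hf : ContDiff ℝ n fun p : E × ℝ => f p.1 p.2) (hg : ContDiff ℝ m g) (hmn : m + 1 ≤ n) :
    ContDiff ℝ m fun x => deriv (f x) (g x) :=
  ContDiff.fderiv_apply hf hg contDiff_const hmn

lemma continuous_deriv_param {f : E → ℝ → F} {g : E → ℝ}
    (hf : ContDiff ℝ 1 fun p : E × ℝ => f p.1 p.2) (hg : Continuous g) :
    Continuous fun x => deriv (f x) (g x) :=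
  (contDiff_deriv_param hf (contDiff_zero.2 hg) (by simp)).continuous

lemma hasDerivAt_slice_fst {G : ℝ × ℝ → F} {G' : ℝ × ℝ →L[ℝ] F} {x y : ℝ}
    (hG : HasFDerivAt G G' (x, y)) : HasDerivAt (fun s => G (s, y)) (G' (1, 0)) x :=
  hG.comp_hasDerivAt (f := fun s => (s, y)) x ((hasDerivAt_id x).prodMk (hasDerivAt_const x y))

lemma hasDerivAt_slice_snd {G : ℝ × ℝ → F} {G' : ℝ × ℝ →L[ℝ] F} {x y : ℝ}
    (hG : HasFDerivAt G G' (x, y)) : HasDerivAt (fun s => G (x, s)) (G' (0, 1)) y :=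
  hG.comp_hasDerivAt (f := fun s => (x, s)) y ((hasDerivAt_const y x).prodMk (hasDerivAt_id y))

lemma hasDerivAt_comp_graph {f : ℝ → ℝ → F} {γ : ℝ → ℝ} {γ' s : ℝ}
    (hf : DifferentiableAt ℝ (fun p : ℝ × ℝ => f p.1 p.2) (s, γ s)) (hγ : HasDerivAt γ γ' s) :
    HasDerivAt (fun r => f r (γ r))
      (deriv (fun r => f r (γ s)) s + γ' • deriv (f s) (γ s)) s := by
  have hD := hf.hasFDerivAt
  refine (hD.comp_hasDerivAt s ((hasDerivAt_id s).prodMk hγ)).congr_deriv ?_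
  rw [(hasDerivAt_slice_fst hD).deriv, (hasDerivAt_slice_snd hD).deriv, ← map_smul, ← map_add]
  simp

lemma deriv_deriv_comm {f : ℝ → ℝ → F} (hf : ContDiff ℝ 2 fun p : ℝ × ℝ => f p.1 p.2)
    (x y : ℝ) :
    deriv (fun s => deriv (fun r => f s r) y) x = deriv (fun r => deriv (fun s => f s r) x) y := by
  have hD (p : ℝ × ℝ) := (hf.differentiable two_ne_zero p).hasFDerivAt
  have hD₂ := (((hf.fderiv_right (m := 1) one_add_one_eq_two.le).differentiable
    one_ne_zero) (x, y)).hasFDerivAt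
  have hx (s r : ℝ) := (hasDerivAt_slice_fst (hD (s, r))).deriv
  have hy (s r : ℝ) := (hasDerivAt_slice_snd (hD (s, r))).deriv
  dsimp only at hx hy
  simp only [hx, hy]
  have hxy := (hasDerivAt_slice_fst hD₂).clm_apply (hasDerivAt_const x ((0 : ℝ), (1 : ℝ)))
  have hyx := (hasDerivAt_slice_snd hD₂).clm_apply (hasDerivAt_const y ((1 : ℝ), (0 : ℝ)))
  rw [hxy.deriv, hyx.deriv, map_zero, add_zero, add_zero]
  exact hf.contDiffAt.isSymmSndFDerivAt (by simp) _ _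

end TwoVariableCalculus

section PartialDerivatives

variable {m n : WithTop ℕ∞} {η : ℝ → ℝ → ℝ → ℝ} {ϕ : ℝ → ℝ → ℝ → ℝ → ℝ}

lemma contDiff_etaT3 (hη : ContDiff ℝ n fun p : ℝ × ℝ × ℝ => η p.1 p.2.1 p.2.2)
    (hmn : m + 1 ≤ n) : ContDiff ℝ m fun p : ℝ × ℝ × ℝ => etaT3 η p.1 p.2.1 p.2.2 :=
  contDiff_deriv_param (f := fun (p : ℝ × ℝ × ℝ) s => η s p.2.1 p.2.2) (by fun_prop)
    (by fun_prop) hmn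

lemma contDiff_phiT3 (hϕ : ContDiff ℝ n fun p : ℝ × ℝ × ℝ × ℝ => ϕ p.1 p.2.1 p.2.2.1 p.2.2.2)
    (hmn : m + 1 ≤ n) :
    ContDiff ℝ m fun p : ℝ × ℝ × ℝ × ℝ => phiT3 ϕ p.1 p.2.1 p.2.2.1 p.2.2.2 :=
  contDiff_deriv_param (f := fun (p : ℝ × ℝ × ℝ × ℝ) s => ϕ s p.2.1 p.2.2.1 p.2.2.2)
    (by fun_prop) (by fun_prop) hmn

lemma contDiff_phiX1 (hϕ : ContDiff ℝ n fun p : ℝ × ℝ × ℝ × ℝ => ϕ p.1 p.2.1 p.2.2.1 p.2.2.2)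
    (hmn : m + 1 ≤ n) :
    ContDiff ℝ m fun p : ℝ × ℝ × ℝ × ℝ => phiX1 ϕ p.1 p.2.1 p.2.2.1 p.2.2.2 :=
  contDiff_deriv_param (f := fun (p : ℝ × ℝ × ℝ × ℝ) s => ϕ p.1 s p.2.2.1 p.2.2.2)
    (by fun_prop) (by fun_prop) hmn

lemma contDiff_phiX2 (hϕ : ContDiff ℝ n fun p : ℝ × ℝ × ℝ × ℝ => ϕ p.1 p.2.1 p.2.2.1 p.2.2.2)
    (hmn : m + 1 ≤ n) :
    ContDiff ℝ m fun p : ℝ × ℝ × ℝ × ℝ => phiX2 ϕ p.1 p.2.1 p.2.2.1 p.2.2.2 :=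
  contDiff_deriv_param (f := fun (p : ℝ × ℝ × ℝ × ℝ) s => ϕ p.1 p.2.1 s p.2.2.2)
    (by fun_prop) (by fun_prop) hmn

lemma contDiff_phiY3 (hϕ : ContDiff ℝ n fun p : ℝ × ℝ × ℝ × ℝ => ϕ p.1 p.2.1 p.2.2.1 p.2.2.2)
    (hmn : m + 1 ≤ n) :
    ContDiff ℝ m fun p : ℝ × ℝ × ℝ × ℝ => phiY3 ϕ p.1 p.2.1 p.2.2.1 p.2.2.2 :=
  contDiff_deriv_param (f := fun (p : ℝ × ℝ × ℝ × ℝ) s => ϕ p.1 p.2.1 p.2.2.1 s)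
    (by fun_prop) (by fun_prop) hmn

section Commutation

variable (hϕ : ContDiff ℝ 2 fun p : ℝ × ℝ × ℝ × ℝ => ϕ p.1 p.2.1 p.2.2.1 p.2.2.2)
include hϕ

lemma phiT3_phiX1 : phiT3 (phiX1 ϕ) = phiX1 (phiT3 ϕ) := by
  ext t x₁ x₂ y
  exact deriv_deriv_comm (f := fun s r => ϕ s r x₂ y) (by fun_prop) t x₁

lemma phiT3_phiX2 : phiT3 (phiX2 ϕ) = phiX2 (phiT3 ϕ) := by
  ext t x₁ x₂ y
  exact deriv_deriv_comm (f := fun s r => ϕ s x₁ r y) (by fun_prop) t x₂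

lemma phiT3_phiY3 : phiT3 (phiY3 ϕ) = phiY3 (phiT3 ϕ) := by
  ext t x₁ x₂ y
  exact deriv_deriv_comm (f := fun s r => ϕ s x₁ x₂ r) (by fun_prop) t y

lemma phiX1_phiY3 : phiX1 (phiY3 ϕ) = phiY3 (phiX1 ϕ) := by
  ext t x₁ x₂ y
  exact deriv_deriv_comm (f := fun s r => ϕ t s x₂ r) (by fun_prop) x₁ y

lemma phiX2_phiY3 : phiX2 (phiY3 ϕ) = phiY3 (phiX2 ϕ) := by
  ext t x₁ x₂ y
  exact deriv_deriv_comm (f := fun s r => ϕ t x₁ s r) (by fun_prop) x₂ y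

end Commutation

section SliceDerivatives

lemma hasDerivAt_etaT3 (hη : Differentiable ℝ fun p : ℝ × ℝ × ℝ => η p.1 p.2.1 p.2.2)
    (t x₁ x₂ : ℝ) : HasDerivAt (fun s => η s x₁ x₂) (etaT3 η t x₁ x₂) t :=
  DifferentiableAt.hasDerivAt (by fun_prop)

lemma hasDerivAt_etaX1 (hη : Differentiable ℝ fun p : ℝ × ℝ × ℝ => η p.1 p.2.1 p.2.2)
    (t x₁ x₂ : ℝ) : HasDerivAt (fun s => η t s x₂) (etaX1 η t x₁ x₂) x₁ :=
  DifferentiableAt.hasDerivAt (by fun_prop)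

lemma hasDerivAt_etaX2 (hη : Differentiable ℝ fun p : ℝ × ℝ × ℝ => η p.1 p.2.1 p.2.2)
    (t x₁ x₂ : ℝ) : HasDerivAt (fun s => η t x₁ s) (etaX2 η t x₁ x₂) x₂ :=
  DifferentiableAt.hasDerivAt (by fun_prop)

variable (hϕ : Differentiable ℝ fun p : ℝ × ℝ × ℝ × ℝ => ϕ p.1 p.2.1 p.2.2.1 p.2.2.2)
include hϕ

lemma hasDerivAt_phiT3 (t x₁ x₂ y : ℝ) :
    HasDerivAt (fun s => ϕ s x₁ x₂ y) (phiT3 ϕ t x₁ x₂ y) t :=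
  DifferentiableAt.hasDerivAt (by fun_prop)

lemma hasDerivAt_phiX1 (t x₁ x₂ y : ℝ) :
    HasDerivAt (fun s => ϕ t s x₂ y) (phiX1 ϕ t x₁ x₂ y) x₁ :=
  DifferentiableAt.hasDerivAt (by fun_prop)

lemma hasDerivAt_phiX2 (t x₁ x₂ y : ℝ) :
    HasDerivAt (fun s => ϕ t x₁ s y) (phiX2 ϕ t x₁ x₂ y) x₂ :=
  DifferentiableAt.hasDerivAt (by fun_prop)

lemma hasDerivAt_phiY3 (t x₁ x₂ y : ℝ) :
    HasDerivAt (fun s => ϕ t x₁ x₂ s) (phiY3 ϕ t x₁ x₂ y) y :=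
  DifferentiableAt.hasDerivAt (by fun_prop)

lemma hasDerivAt_psi3 (hη : Differentiable ℝ fun p : ℝ × ℝ × ℝ => η p.1 p.2.1 p.2.2)
    (t x₁ x₂ : ℝ) :
    HasDerivAt (fun s => psi3 η ϕ s x₁ x₂)
      (phiT3 ϕ t x₁ x₂ (η t x₁ x₂) + etaT3 η t x₁ x₂ * phiY3 ϕ t x₁ x₂ (η t x₁ x₂)) t :=
  hasDerivAt_comp_graph (f := fun s r => ϕ s x₁ x₂ r) (by fun_prop)
    (hasDerivAt_etaT3 hη t x₁ x₂)

lemma psi3T_eq (hη : Differentiable ℝ fun p : ℝ × ℝ × ℝ => η p.1 p.2.1 p.2.2)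
    (t x₁ x₂ : ℝ) :
    psi3T η ϕ t x₁ x₂
      = phiT3 ϕ t x₁ x₂ (η t x₁ x₂) + etaT3 η t x₁ x₂ * phiY3 ϕ t x₁ x₂ (η t x₁ x₂) :=
  (hasDerivAt_psi3 hϕ hη t x₁ x₂).deriv

end SliceDerivatives

lemma continuous_psi3T (hη : ContDiff ℝ 1 fun p : ℝ × ℝ × ℝ => η p.1 p.2.1 p.2.2)
    (hϕ : ContDiff ℝ 1 fun p : ℝ × ℝ × ℝ × ℝ => ϕ p.1 p.2.1 p.2.2.1 p.2.2.2) :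
    Continuous fun p : ℝ × ℝ × ℝ => psi3T η ϕ p.1 p.2.1 p.2.2 :=
  continuous_deriv_param
    (f := fun (p : ℝ × ℝ × ℝ) s => ϕ s p.2.1 p.2.2 (η s p.2.1 p.2.2)) (by fun_prop) (by fun_prop)

lemma continuous_gradXSq3
    (hϕ : ContDiff ℝ 1 fun p : ℝ × ℝ × ℝ × ℝ => ϕ p.1 p.2.1 p.2.2.1 p.2.2.2) :
    Continuous fun p : ℝ × ℝ × ℝ × ℝ => gradXSq3 ϕ p.1 p.2.1 p.2.2.1 p.2.2.2 := by
  have hX1 := contDiff_phiX1 (m := 0) hϕ (by simp)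
  have hX2 := contDiff_phiX2 (m := 0) hϕ (by simp)
  unfold gradXSq3
  fun_prop

lemma continuous_gradSq3
    (hϕ : ContDiff ℝ 1 fun p : ℝ × ℝ × ℝ × ℝ => ϕ p.1 p.2.1 p.2.2.1 p.2.2.2) :
    Continuous fun p : ℝ × ℝ × ℝ × ℝ => gradSq3 ϕ p.1 p.2.1 p.2.2.1 p.2.2.2 := by
  have hX := continuous_gradXSq3 hϕ
  have hY := contDiff_phiY3 (m := 0) hϕ (by simp)
  exact hX.add (hY.continuous.pow 2)

lemma hasDerivAt_gradSq3
    (hϕ : ContDiff ℝ 2 fun p : ℝ × ℝ × ℝ × ℝ => ϕ p.1 p.2.1 p.2.2.1 p.2.2.2)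
    (t x₁ x₂ y : ℝ) :
    HasDerivAt (fun s => gradSq3 ϕ s x₁ x₂ y)
      (2 * (phiX1 (phiT3 ϕ) t x₁ x₂ y * phiX1 ϕ t x₁ x₂ y
        + phiX2 (phiT3 ϕ) t x₁ x₂ y * phiX2 ϕ t x₁ x₂ y
        + phiY3 (phiT3 ϕ) t x₁ x₂ y * phiY3 ϕ t x₁ x₂ y)) t := by
  have h₁₂ : (1 : WithTop ℕ∞) + 1 ≤ 2 := one_add_one_eq_two.le
  have hX1 := (contDiff_phiX1 hϕ h₁₂).differentiable one_ne_zero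
  have hX2 := (contDiff_phiX2 hϕ h₁₂).differentiable one_ne_zero
  have hY3 := (contDiff_phiY3 hϕ h₁₂).differentiable one_ne_zero
  refine ((((hasDerivAt_phiT3 hX1 t x₁ x₂ y).pow 2).add
    ((hasDerivAt_phiT3 hX2 t x₁ x₂ y).pow 2)).add
      ((hasDerivAt_phiT3 hY3 t x₁ x₂ y).pow 2)).congr_deriv ?_
  rw [phiT3_phiX1 hϕ, phiT3_phiX2 hϕ, phiT3_phiY3 hϕ]
  ring

lemma divergence_mul_grad {f : ℝ → ℝ → ℝ → ℝ}
    (hf : Differentiable ℝ fun p : ℝ × ℝ × ℝ => f p.1 p.2.1 p.2.2)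
    (hϕ : ContDiff ℝ 2 fun p : ℝ × ℝ × ℝ × ℝ => ϕ p.1 p.2.1 p.2.2.1 p.2.2.2)
    (t x₁ x₂ y : ℝ) :
    deriv (fun s => f s x₂ y * phiX1 ϕ t s x₂ y) x₁
        + deriv (fun s => f x₁ s y * phiX2 ϕ t x₁ s y) x₂
        + deriv (fun s => f x₁ x₂ s * phiY3 ϕ t x₁ x₂ s) y
      = deriv (fun s => f s x₂ y) x₁ * phiX1 ϕ t x₁ x₂ y
        + deriv (fun s => f x₁ s y) x₂ * phiX2 ϕ t x₁ x₂ y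
        + deriv (f x₁ x₂) y * phiY3 ϕ t x₁ x₂ y
        + f x₁ x₂ y * (phiX1 (phiX1 ϕ) t x₁ x₂ y + phiX2 (phiX2 ϕ) t x₁ x₂ y
          + phiY3 (phiY3 ϕ) t x₁ x₂ y) := by
  have h₁₂ : (1 : WithTop ℕ∞) + 1 ≤ 2 := one_add_one_eq_two.le
  have hX1 := (contDiff_phiX1 hϕ h₁₂).differentiable one_ne_zero
  have hX2 := (contDiff_phiX2 hϕ h₁₂).differentiable one_ne_zero
  have hY3 := (contDiff_phiY3 hϕ h₁₂).differentiable one_ne_zero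
  have d₁ : deriv (fun s => f s x₂ y * phiX1 ϕ t s x₂ y) x₁
      = deriv (fun s => f s x₂ y) x₁ * phiX1 ϕ t x₁ x₂ y
        + f x₁ x₂ y * phiX1 (phiX1 ϕ) t x₁ x₂ y :=
    deriv_fun_mul (by fun_prop) (by fun_prop)
  have d₂ : deriv (fun s => f x₁ s y * phiX2 ϕ t x₁ s y) x₂
      = deriv (fun s => f x₁ s y) x₂ * phiX2 ϕ t x₁ x₂ y
        + f x₁ x₂ y * phiX2 (phiX2 ϕ) t x₁ x₂ y :=
    deriv_fun_mul (by fun_prop) (by fun_prop)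
  have d₃ : deriv (fun s => f x₁ x₂ s * phiY3 ϕ t x₁ x₂ s) y
      = deriv (f x₁ x₂) y * phiY3 ϕ t x₁ x₂ y + f x₁ x₂ y * phiY3 (phiY3 ϕ) t x₁ x₂ y :=
    deriv_fun_mul (by fun_prop) (by fun_prop)
  rw [d₁, d₂, d₃]
  ring

/-- This field is `η` times the `y`-row of `∇ϕ ⊗ ∇ϕ - (1/2)|∇ϕ|² I`, a tensor whose divergence is
`Δϕ ∇ϕ`: that is why no second derivative survives except in `Δϕ`. -/
lemma divergence_rellich_field (hη : Differentiable ℝ fun p : ℝ × ℝ × ℝ => η p.1 p.2.1 p.2.2)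
    (hϕ : ContDiff ℝ 2 fun p : ℝ × ℝ × ℝ × ℝ => ϕ p.1 p.2.1 p.2.2.1 p.2.2.2)
    (t x₁ x₂ y : ℝ) :
    deriv (fun s => η t s x₂ * (phiY3 ϕ t s x₂ y * phiX1 ϕ t s x₂ y)) x₁
        + deriv (fun s => η t x₁ s * (phiY3 ϕ t x₁ s y * phiX2 ϕ t x₁ s y)) x₂
        + deriv (fun s =>
            η t x₁ x₂ * (1 / 2 * (phiY3 ϕ t x₁ x₂ s ^ 2 - gradXSq3 ϕ t x₁ x₂ s))) y
      = phiY3 ϕ t x₁ x₂ y * (etaX1 η t x₁ x₂ * phiX1 ϕ t x₁ x₂ y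
          + etaX2 η t x₁ x₂ * phiX2 ϕ t x₁ x₂ y)
        + η t x₁ x₂ * phiY3 ϕ t x₁ x₂ y * (phiX1 (phiX1 ϕ) t x₁ x₂ y
          + phiX2 (phiX2 ϕ) t x₁ x₂ y + phiY3 (phiY3 ϕ) t x₁ x₂ y) := by
  have h₁₂ : (1 : WithTop ℕ∞) + 1 ≤ 2 := one_add_one_eq_two.le
  have hX1 := (contDiff_phiX1 hϕ h₁₂).differentiable one_ne_zero
  have hX2 := (contDiff_phiX2 hϕ h₁₂).differentiable one_ne_zero
  have hY3 := (contDiff_phiY3 hϕ h₁₂).differentiable one_ne_zero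
  have d₁ := (hasDerivAt_etaX1 hη t x₁ x₂).fun_mul
    ((hasDerivAt_phiX1 hY3 t x₁ x₂ y).fun_mul (hasDerivAt_phiX1 hX1 t x₁ x₂ y))
  have d₂ := (hasDerivAt_etaX2 hη t x₁ x₂).fun_mul
    ((hasDerivAt_phiX2 hY3 t x₁ x₂ y).fun_mul (hasDerivAt_phiX2 hX2 t x₁ x₂ y))
  have d₃ := ((((hasDerivAt_phiY3 hY3 t x₁ x₂ y).pow 2).sub
    (((hasDerivAt_phiY3 hX1 t x₁ x₂ y).pow 2).add
      ((hasDerivAt_phiY3 hX2 t x₁ x₂ y).pow 2))).const_mul (1 / 2)).const_mul (η t x₁ x₂)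
  refine (congrArg₂ (· + ·) (congrArg₂ (· + ·) d₁.deriv d₂.deriv) d₃.deriv).trans ?_
  rw [phiX1_phiY3 hϕ, phiX2_phiY3 hϕ]
  ring

end PartialDerivatives

section IteratedIntegrals

variable {E : Type*} [NormedAddCommGroup E] [NormedSpace ℝ E]

lemma intervalIntegral_intervalIntegral_swap_of_continuous {f : ℝ → ℝ → E}
    (hf : Continuous fun p : ℝ × ℝ => f p.1 p.2) (a₁ b₁ a₂ b₂ : ℝ) :
    ∫ x in a₁..b₁, ∫ y in a₂..b₂, f x y = ∫ y in a₂..b₂, ∫ x in a₁..b₁, f x y :=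
  intervalIntegral_intervalIntegral_swap <|
    (hf.continuousOn.integrableOn_compact (isCompact_uIcc.prod isCompact_uIcc)).mono_set
      (prod_mono uIoc_subset_uIcc uIoc_subset_uIcc)

lemma intervalIntegral_intervalIntegral_add {f g : ℝ → ℝ → E}
    (hf : Continuous fun p : ℝ × ℝ => f p.1 p.2)
    (hg : Continuous fun p : ℝ × ℝ => g p.1 p.2) (a₁ b₁ a₂ b₂ : ℝ) :
    ∫ x in a₁..b₁, ∫ y in a₂..b₂, (f x y + g x y)
      = (∫ x in a₁..b₁, ∫ y in a₂..b₂, f x y) + ∫ x in a₁..b₁, ∫ y in a₂..b₂, g x y := by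
  have inner (x : ℝ) : ∫ y in a₂..b₂, (f x y + g x y)
      = (∫ y in a₂..b₂, f x y) + ∫ y in a₂..b₂, g x y :=
    intervalIntegral.integral_add (Continuous.intervalIntegrable (by fun_prop) _ _)
      (Continuous.intervalIntegrable (by fun_prop) _ _)
  simp only [inner]
  exact intervalIntegral.integral_add (Continuous.intervalIntegrable (by fun_prop) _ _)
    (Continuous.intervalIntegrable (by fun_prop) _ _)

lemma integral_subgraph_add {f g : ℝ → ℝ → ℝ → E} {e : ℝ → ℝ → ℝ}
    (hf : Continuous fun p : ℝ × ℝ × ℝ => f p.1 p.2.1 p.2.2)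
    (hg : Continuous fun p : ℝ × ℝ × ℝ => g p.1 p.2.1 p.2.2)
    (he : Continuous fun p : ℝ × ℝ => e p.1 p.2) (a₁ b₁ a₂ b₂ c : ℝ) :
    ∫ x₁ in a₁..b₁, ∫ x₂ in a₂..b₂, ∫ y in c..e x₁ x₂, (f x₁ x₂ y + g x₁ x₂ y)
      = (∫ x₁ in a₁..b₁, ∫ x₂ in a₂..b₂, ∫ y in c..e x₁ x₂, f x₁ x₂ y)
        + ∫ x₁ in a₁..b₁, ∫ x₂ in a₂..b₂, ∫ y in c..e x₁ x₂, g x₁ x₂ y := by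
  have column (x₁ x₂ : ℝ) : ∫ y in c..e x₁ x₂, (f x₁ x₂ y + g x₁ x₂ y)
      = (∫ y in c..e x₁ x₂, f x₁ x₂ y) + ∫ y in c..e x₁ x₂, g x₁ x₂ y :=
    intervalIntegral.integral_add (Continuous.intervalIntegrable (by fun_prop) _ _)
      (Continuous.intervalIntegrable (by fun_prop) _ _)
  simp only [column]
  exact intervalIntegral_intervalIntegral_add (by fun_prop) (by fun_prop) _ _ _ _

lemma intervalIntegral_congr_Icc {f g : ℝ → E} {a b : ℝ} (hab : a ≤ b)
    (h : ∀ x ∈ Icc a b, f x = g x) :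
    ∫ x in a..b, f x = ∫ x in a..b, g x :=
  intervalIntegral.integral_congr (by rwa [uIcc_of_le hab])

lemma intervalIntegral_intervalIntegral_congr_Icc {f g : ℝ → ℝ → E} {a₁ b₁ a₂ b₂ : ℝ}
    (h₁ : a₁ ≤ b₁) (h₂ : a₂ ≤ b₂)
    (h : ∀ x ∈ Icc a₁ b₁, ∀ y ∈ Icc a₂ b₂, f x y = g x y) :
    ∫ x in a₁..b₁, ∫ y in a₂..b₂, f x y = ∫ x in a₁..b₁, ∫ y in a₂..b₂, g x y :=
  intervalIntegral_congr_Icc h₁ fun x hx => intervalIntegral_congr_Icc h₂ (h x hx)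

lemma integral_subgraph_congr {f g : ℝ → ℝ → ℝ → E} {e : ℝ → ℝ → ℝ} {a₁ b₁ a₂ b₂ c : ℝ}
    (h₁ : a₁ ≤ b₁) (h₂ : a₂ ≤ b₂) (hce : ∀ x₁ ∈ Icc a₁ b₁, ∀ x₂ ∈ Icc a₂ b₂, c ≤ e x₁ x₂)
    (h : ∀ x₁ ∈ Icc a₁ b₁, ∀ x₂ ∈ Icc a₂ b₂, ∀ y ∈ Icc c (e x₁ x₂), f x₁ x₂ y = g x₁ x₂ y) :
    ∫ x₁ in a₁..b₁, ∫ x₂ in a₂..b₂, ∫ y in c..e x₁ x₂, f x₁ x₂ y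
      = ∫ x₁ in a₁..b₁, ∫ x₂ in a₂..b₂, ∫ y in c..e x₁ x₂, g x₁ x₂ y :=
  intervalIntegral_intervalIntegral_congr_Icc h₁ h₂ fun x₁ hx₁ x₂ hx₂ =>
    intervalIntegral_congr_Icc (hce x₁ hx₁ x₂ hx₂) (h x₁ hx₁ x₂ hx₂)

lemma intervalIntegral_eq_zero_of_forall_Icc {f : ℝ → E} {a b : ℝ} (hab : a ≤ b)
    (h : ∀ x ∈ Icc a b, f x = 0) : ∫ x in a..b, f x = 0 := by
  rw [intervalIntegral_congr_Icc hab h, intervalIntegral.integral_zero]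

end IteratedIntegrals

section DifferentiationUnderIntegral

variable {E : Type*} [NormedAddCommGroup E] [NormedSpace ℝ E] [CompleteSpace E]

lemma hasDerivAt_intervalIntegral_param {f f' : ℝ → ℝ → E}
    (hf : Continuous fun p : ℝ × ℝ => f p.1 p.2) (hf' : Continuous fun p : ℝ × ℝ => f' p.1 p.2)
    (hd : ∀ s y, HasDerivAt (fun r => f r y) (f' s y) s) (a b s : ℝ) :
    HasDerivAt (fun r => ∫ y in a..b, f r y) (∫ y in a..b, f' s y) s := by
  have increment (r : ℝ) : ∫ y in a..b, f r y
      = (∫ y in a..b, f s y) + ∫ u in s..r, ∫ y in a..b, f' u y := by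
    rw [intervalIntegral_intervalIntegral_swap_of_continuous hf',
      ← intervalIntegral.integral_add (Continuous.intervalIntegrable (by fun_prop) _ _)
        (Continuous.intervalIntegrable (by fun_prop) _ _)]
    congr! 2 with y
    rw [intervalIntegral.integral_eq_sub_of_hasDerivAt (fun u _ => hd u y)
      (Continuous.intervalIntegrable (by fun_prop) _ _), add_sub_cancel]
  rw [funext increment]
  have hc : Continuous fun u => ∫ y in a..b, f' u y := by fun_prop
  exact (hc.integral_hasStrictDerivAt s s).hasDerivAt.const_add _

lemma hasDerivAt_intervalIntegral_intervalIntegral {f f' : ℝ → ℝ → ℝ → E}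
    (hf : Continuous fun p : ℝ × ℝ × ℝ => f p.1 p.2.1 p.2.2)
    (hf' : Continuous fun p : ℝ × ℝ × ℝ => f' p.1 p.2.1 p.2.2)
    (hd : ∀ t x y, HasDerivAt (fun s => f s x y) (f' t x y) t) (a₁ b₁ a₂ b₂ t : ℝ) :
    HasDerivAt (fun s => ∫ x in a₁..b₁, ∫ y in a₂..b₂, f s x y)
      (∫ x in a₁..b₁, ∫ y in a₂..b₂, f' t x y) t :=
  hasDerivAt_intervalIntegral_param (f := fun s x => ∫ y in a₂..b₂, f s x y)
    (f' := fun s x => ∫ y in a₂..b₂, f' s x y) (by fun_prop) (by fun_prop)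
    (fun s x => hasDerivAt_intervalIntegral_param (f := fun s y => f s x y)
      (f' := fun s y => f' s x y) (by fun_prop) (by fun_prop) (fun s y => hd s x y) a₂ b₂ s) a₁ b₁ t

lemma hasDerivAt_intervalIntegral_moving_endpoint {f f' : ℝ → ℝ → E}
    (hf : Continuous fun p : ℝ × ℝ => f p.1 p.2) (hf' : Continuous fun p : ℝ × ℝ => f' p.1 p.2)
    (hd : ∀ s y, HasDerivAt (fun r => f r y) (f' s y) s) {e : ℝ → ℝ} {e' s : ℝ}
    (he : HasDerivAt e e' s) (c : ℝ) :
    HasDerivAt (fun r => ∫ y in c..e r, f r y)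
      ((∫ y in c..e s, f' s y) + e' • f s (e s)) s := by
  have htoSpan := (ContinuousLinearMap.toSpanSingletonCLE (𝕜 := ℝ) (E := E)).continuous
  have hint : Continuous fun p : ℝ × ℝ => ∫ y in c..p.2, f' p.1 y := by fun_prop
  have hG := hasStrictFDerivAt_uncurry_coprod (𝕜 := ℝ) (u := (s, e s))
    (f := fun r z => ∫ y in c..z, f r y)
    (f₁ := fun r z => ContinuousLinearMap.toSpanSingleton ℝ (∫ y in c..z, f' r y))
    (f₂ := fun r z => ContinuousLinearMap.toSpanSingleton ℝ (f r z))
    (.of_forall fun p => (hasDerivAt_intervalIntegral_param hf hf' hd c p.2 p.1).hasFDerivAt)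
    (.of_forall fun p => by
      have hc : Continuous fun u => f p.1 u := by fun_prop
      exact (hc.integral_hasStrictDerivAt c p.2).hasDerivAt.hasFDerivAt)
    (htoSpan.comp hint).continuousAt (htoSpan.comp hf).continuousAt
  refine (hG.hasFDerivAt.comp_hasDerivAt_of_eq s ((hasDerivAt_id s).prodMk he) rfl).congr_deriv ?_
  simp [Function.HasUncurry.uncurry]

lemma hasDerivAt_integral_subgraph {f f' : ℝ → ℝ → ℝ → ℝ → E} {e e' : ℝ → ℝ → ℝ → ℝ}
    (hf : Continuous fun p : ℝ × ℝ × ℝ × ℝ => f p.1 p.2.1 p.2.2.1 p.2.2.2)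
    (hf' : Continuous fun p : ℝ × ℝ × ℝ × ℝ => f' p.1 p.2.1 p.2.2.1 p.2.2.2)
    (he : Continuous fun p : ℝ × ℝ × ℝ => e p.1 p.2.1 p.2.2)
    (he' : Continuous fun p : ℝ × ℝ × ℝ => e' p.1 p.2.1 p.2.2)
    (hdf : ∀ t x₁ x₂ y, HasDerivAt (fun s => f s x₁ x₂ y) (f' t x₁ x₂ y) t)
    (hde : ∀ t x₁ x₂, HasDerivAt (fun s => e s x₁ x₂) (e' t x₁ x₂) t) (a₁ b₁ a₂ b₂ c t : ℝ) :
    HasDerivAt (fun s => ∫ x₁ in a₁..b₁, ∫ x₂ in a₂..b₂, ∫ y in c..e s x₁ x₂, f s x₁ x₂ y)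
      ((∫ x₁ in a₁..b₁, ∫ x₂ in a₂..b₂, ∫ y in c..e t x₁ x₂, f' t x₁ x₂ y)
        + ∫ x₁ in a₁..b₁, ∫ x₂ in a₂..b₂, e' t x₁ x₂ • f t x₁ x₂ (e t x₁ x₂)) t := by
  rw [← intervalIntegral_intervalIntegral_add (by fun_prop) (by fun_prop)]
  exact hasDerivAt_intervalIntegral_intervalIntegral
    (f := fun s x₁ x₂ => ∫ y in c..e s x₁ x₂, f s x₁ x₂ y)
    (f' := fun t x₁ x₂ => (∫ y in c..e t x₁ x₂, f' t x₁ x₂ y)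
      + e' t x₁ x₂ • f t x₁ x₂ (e t x₁ x₂)) (by fun_prop) (by fun_prop)
    (fun t x₁ x₂ => hasDerivAt_intervalIntegral_moving_endpoint (f := fun s y => f s x₁ x₂ y)
      (f' := fun s y => f' s x₁ x₂ y) (by fun_prop) (by fun_prop)
      (fun s y => hdf s x₁ x₂ y) (hde t x₁ x₂) c) a₁ b₁ a₂ b₂ t

end DifferentiationUnderIntegral

section DivergenceTheorem

lemma integral_deriv_moving_endpoint {f : ℝ → ℝ → ℝ} {e : ℝ → ℝ}
    (hf : ContDiff ℝ 1 fun p : ℝ × ℝ => f p.1 p.2) (he : ContDiff ℝ 1 e) (a b c : ℝ) :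
    ∫ s in a..b, ∫ y in c..e s, deriv (fun r => f r y) s
      = (∫ y in c..e b, f b y) - (∫ y in c..e a, f a y)
        - ∫ s in a..b, deriv e s * f s (e s) := by
  have hfd := hf.differentiable one_ne_zero
  have hf' : Continuous fun p : ℝ × ℝ => deriv (fun r => f r p.2) p.1 :=
    continuous_deriv_param (f := fun (p : ℝ × ℝ) s => f s p.2) (by fun_prop) (by fun_prop)
  have hd (s : ℝ) := hasDerivAt_intervalIntegral_moving_endpoint hf.continuous
    (f' := fun s y => deriv (fun r => f r y) s) hf'
    (fun s y => DifferentiableAt.hasDerivAt (by fun_prop))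
    (he.differentiable one_ne_zero s).hasDerivAt c
  rw [← intervalIntegral.integral_eq_sub_of_hasDerivAt (fun s _ => hd s)
      (Continuous.intervalIntegrable (by fun_prop) _ _),
    ← intervalIntegral.integral_sub (Continuous.intervalIntegrable (by fun_prop) _ _)
      (Continuous.intervalIntegrable (by fun_prop) _ _)]
  simp

variable {A B C : ℝ → ℝ → ℝ → ℝ} {e : ℝ → ℝ → ℝ}

lemma integral_subgraph_deriv_snd (hB : ContDiff ℝ 1 fun p : ℝ × ℝ × ℝ => B p.1 p.2.1 p.2.2)
    (he : ContDiff ℝ 1 fun p : ℝ × ℝ => e p.1 p.2) (a₁ b₁ a₂ b₂ c : ℝ) :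
    ∫ x₁ in a₁..b₁, ∫ x₂ in a₂..b₂, ∫ y in c..e x₁ x₂, deriv (fun s => B x₁ s y) x₂
      = (∫ x₁ in a₁..b₁, ∫ y in c..e x₁ b₂, B x₁ b₂ y)
        - (∫ x₁ in a₁..b₁, ∫ y in c..e x₁ a₂, B x₁ a₂ y)
        - ∫ x₁ in a₁..b₁, ∫ x₂ in a₂..b₂, deriv (e x₁) x₂ * B x₁ x₂ (e x₁ x₂) := by
  have he' : Continuous fun p : ℝ × ℝ => deriv (e p.1) p.2 :=
    continuous_deriv_param (f := fun (p : ℝ × ℝ) s => e p.1 s) (by fun_prop) (by fun_prop)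
  have slice (x₁ : ℝ) := integral_deriv_moving_endpoint (f := B x₁) (e := e x₁)
    (by fun_prop) (by fun_prop) a₂ b₂ c
  simp only [slice]
  rw [intervalIntegral.integral_sub (Continuous.intervalIntegrable (by fun_prop) _ _)
      (Continuous.intervalIntegrable (by fun_prop) _ _),
    intervalIntegral.integral_sub (Continuous.intervalIntegrable (by fun_prop) _ _)
      (Continuous.intervalIntegrable (by fun_prop) _ _)]

lemma integral_subgraph_deriv_fst (hA : ContDiff ℝ 1 fun p : ℝ × ℝ × ℝ => A p.1 p.2.1 p.2.2)
    (he : ContDiff ℝ 1 fun p : ℝ × ℝ => e p.1 p.2) (a₁ b₁ a₂ b₂ c : ℝ) :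
    ∫ x₁ in a₁..b₁, ∫ x₂ in a₂..b₂, ∫ y in c..e x₁ x₂, deriv (fun s => A s x₂ y) x₁
      = (∫ x₂ in a₂..b₂, ∫ y in c..e b₁ x₂, A b₁ x₂ y)
        - (∫ x₂ in a₂..b₂, ∫ y in c..e a₁ x₂, A a₁ x₂ y)
        - ∫ x₁ in a₁..b₁, ∫ x₂ in a₂..b₂,
            deriv (fun s => e s x₂) x₁ * A x₁ x₂ (e x₁ x₂) := by
  let A' : ℝ → ℝ → ℝ → ℝ := fun x₁ x₂ y => deriv (fun s => A s x₂ y) x₁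
  have hA' : Continuous fun p : ℝ × ℝ × ℝ => A' p.1 p.2.1 p.2.2 :=
    continuous_deriv_param (f := fun (p : ℝ × ℝ × ℝ) s => A s p.2.1 p.2.2) (by fun_prop)
      (by fun_prop)
  have he' : Continuous fun p : ℝ × ℝ => deriv (fun s => e s p.2) p.1 :=
    continuous_deriv_param (f := fun (p : ℝ × ℝ) s => e s p.2) (by fun_prop) (by fun_prop)
  rw [intervalIntegral_intervalIntegral_swap_of_continuous
      (f := fun x₁ x₂ => ∫ y in c..e x₁ x₂, A' x₁ x₂ y) (by fun_prop),
    intervalIntegral_intervalIntegral_swap_of_continuous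
      (f := fun x₁ x₂ => deriv (fun s => e s x₂) x₁ * A x₁ x₂ (e x₁ x₂)) (by fun_prop)]
  exact integral_subgraph_deriv_snd (B := fun x₂ x₁ => A x₁ x₂) (e := fun x₂ x₁ => e x₁ x₂)
    (by fun_prop) (by fun_prop) a₂ b₂ a₁ b₁ c

lemma integral_subgraph_deriv_vertical
    (hC : ContDiff ℝ 1 fun p : ℝ × ℝ × ℝ => C p.1 p.2.1 p.2.2)
    (he : Continuous fun p : ℝ × ℝ => e p.1 p.2) (a₁ b₁ a₂ b₂ c : ℝ) :
    ∫ x₁ in a₁..b₁, ∫ x₂ in a₂..b₂, ∫ y in c..e x₁ x₂, deriv (C x₁ x₂) y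
      = (∫ x₁ in a₁..b₁, ∫ x₂ in a₂..b₂, C x₁ x₂ (e x₁ x₂))
        - ∫ x₁ in a₁..b₁, ∫ x₂ in a₂..b₂, C x₁ x₂ c := by
  let C' : ℝ → ℝ → ℝ → ℝ := fun x₁ x₂ y => deriv (C x₁ x₂) y
  have hC' : Continuous fun p : ℝ × ℝ × ℝ => C' p.1 p.2.1 p.2.2 :=
    continuous_deriv_param (f := fun (p : ℝ × ℝ × ℝ) s => C p.1 p.2.1 s) (by fun_prop)
      (by fun_prop)
  have hCd := hC.differentiable one_ne_zero
  have column (x₁ x₂ : ℝ) :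
      C x₁ x₂ (e x₁ x₂) = (∫ y in c..e x₁ x₂, C' x₁ x₂ y) + C x₁ x₂ c := by
    rw [intervalIntegral.integral_deriv_eq_sub (fun y _ => by fun_prop)
      (Continuous.intervalIntegrable (by fun_prop) _ _), sub_add_cancel]
  rw [eq_sub_iff_add_eq]
  simp only [column]
  exact (intervalIntegral_intervalIntegral_add (f := fun x₁ x₂ => ∫ y in c..e x₁ x₂, C' x₁ x₂ y)
    (by fun_prop) (by fun_prop) _ _ _ _).symm

lemma integral_subgraph_divergence
    (hA : ContDiff ℝ 1 fun p : ℝ × ℝ × ℝ => A p.1 p.2.1 p.2.2)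
    (hB : ContDiff ℝ 1 fun p : ℝ × ℝ × ℝ => B p.1 p.2.1 p.2.2)
    (hC : ContDiff ℝ 1 fun p : ℝ × ℝ × ℝ => C p.1 p.2.1 p.2.2)
    (he : ContDiff ℝ 1 fun p : ℝ × ℝ => e p.1 p.2) (a₁ b₁ a₂ b₂ c : ℝ) :
    ∫ x₁ in a₁..b₁, ∫ x₂ in a₂..b₂, ∫ y in c..e x₁ x₂,
        (deriv (fun s => A s x₂ y) x₁ + deriv (fun s => B x₁ s y) x₂ + deriv (C x₁ x₂) y)
      = (∫ x₁ in a₁..b₁, ∫ x₂ in a₂..b₂,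
          (C x₁ x₂ (e x₁ x₂) - (deriv (fun s => e s x₂) x₁ * A x₁ x₂ (e x₁ x₂)
            + deriv (e x₁) x₂ * B x₁ x₂ (e x₁ x₂))))
        - (∫ x₁ in a₁..b₁, ∫ x₂ in a₂..b₂, C x₁ x₂ c)
        + ((∫ x₂ in a₂..b₂, ∫ y in c..e b₁ x₂, A b₁ x₂ y)
          - ∫ x₂ in a₂..b₂, ∫ y in c..e a₁ x₂, A a₁ x₂ y)
        + ((∫ x₁ in a₁..b₁, ∫ y in c..e x₁ b₂, B x₁ b₂ y)
          - ∫ x₁ in a₁..b₁, ∫ y in c..e x₁ a₂, B x₁ a₂ y) := by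
  let A' : ℝ → ℝ → ℝ → ℝ := fun x₁ x₂ y => deriv (fun s => A s x₂ y) x₁
  let B' : ℝ → ℝ → ℝ → ℝ := fun x₁ x₂ y => deriv (fun s => B x₁ s y) x₂
  let C' : ℝ → ℝ → ℝ → ℝ := fun x₁ x₂ y => deriv (C x₁ x₂) y
  let e₁ : ℝ → ℝ → ℝ := fun x₁ x₂ => deriv (fun s => e s x₂) x₁
  let e₂ : ℝ → ℝ → ℝ := fun x₁ x₂ => deriv (e x₁) x₂
  have hA' : Continuous fun p : ℝ × ℝ × ℝ => A' p.1 p.2.1 p.2.2 :=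
    continuous_deriv_param (f := fun (p : ℝ × ℝ × ℝ) s => A s p.2.1 p.2.2) (by fun_prop)
      (by fun_prop)
  have hB' : Continuous fun p : ℝ × ℝ × ℝ => B' p.1 p.2.1 p.2.2 :=
    continuous_deriv_param (f := fun (p : ℝ × ℝ × ℝ) s => B p.1 s p.2.2) (by fun_prop)
      (by fun_prop)
  have hC' : Continuous fun p : ℝ × ℝ × ℝ => C' p.1 p.2.1 p.2.2 :=
    continuous_deriv_param (f := fun (p : ℝ × ℝ × ℝ) s => C p.1 p.2.1 s) (by fun_prop)
      (by fun_prop)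
  have he₁ : Continuous fun p : ℝ × ℝ => e₁ p.1 p.2 :=
    continuous_deriv_param (f := fun (p : ℝ × ℝ) s => e s p.2) (by fun_prop) (by fun_prop)
  have he₂ : Continuous fun p : ℝ × ℝ => e₂ p.1 p.2 :=
    continuous_deriv_param (f := fun (p : ℝ × ℝ) s => e p.1 s) (by fun_prop) (by fun_prop)
  have volume_split : ∫ x₁ in a₁..b₁, ∫ x₂ in a₂..b₂, ∫ y in c..e x₁ x₂,
        (A' x₁ x₂ y + B' x₁ x₂ y + C' x₁ x₂ y)
      = (∫ x₁ in a₁..b₁, ∫ x₂ in a₂..b₂, ∫ y in c..e x₁ x₂, A' x₁ x₂ y)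
        + (∫ x₁ in a₁..b₁, ∫ x₂ in a₂..b₂, ∫ y in c..e x₁ x₂, B' x₁ x₂ y)
        + ∫ x₁ in a₁..b₁, ∫ x₂ in a₂..b₂, ∫ y in c..e x₁ x₂, C' x₁ x₂ y := by
    rw [integral_subgraph_add (by fun_prop) (by fun_prop) he.continuous,
      integral_subgraph_add (by fun_prop) (by fun_prop) he.continuous]
  have top_split : ∫ x₁ in a₁..b₁, ∫ x₂ in a₂..b₂, C x₁ x₂ (e x₁ x₂)
      = (∫ x₁ in a₁..b₁, ∫ x₂ in a₂..b₂, (C x₁ x₂ (e x₁ x₂)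
          - (e₁ x₁ x₂ * A x₁ x₂ (e x₁ x₂) + e₂ x₁ x₂ * B x₁ x₂ (e x₁ x₂))))
        + ((∫ x₁ in a₁..b₁, ∫ x₂ in a₂..b₂, e₁ x₁ x₂ * A x₁ x₂ (e x₁ x₂))
          + ∫ x₁ in a₁..b₁, ∫ x₂ in a₂..b₂, e₂ x₁ x₂ * B x₁ x₂ (e x₁ x₂)) := by
    rw [← intervalIntegral_intervalIntegral_add (by fun_prop) (by fun_prop),
      ← intervalIntegral_intervalIntegral_add (by fun_prop) (by fun_prop)]
    simp only [sub_add_cancel]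
  linear_combination volume_split + integral_subgraph_deriv_fst hA he a₁ b₁ a₂ b₂ c
    + integral_subgraph_deriv_snd hB he a₁ b₁ a₂ b₂ c
    + integral_subgraph_deriv_vertical hC he.continuous a₁ b₁ a₂ b₂ c + top_split

lemma integral_subgraph_divergence_of_impermeable
    (hA : ContDiff ℝ 1 fun p : ℝ × ℝ × ℝ => A p.1 p.2.1 p.2.2)
    (hB : ContDiff ℝ 1 fun p : ℝ × ℝ × ℝ => B p.1 p.2.1 p.2.2)
    (hC : ContDiff ℝ 1 fun p : ℝ × ℝ × ℝ => C p.1 p.2.1 p.2.2)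
    (he : ContDiff ℝ 1 fun p : ℝ × ℝ => e p.1 p.2) {a₁ b₁ a₂ b₂ c : ℝ}
    (h₁ : a₁ ≤ b₁) (h₂ : a₂ ≤ b₂) (hce : ∀ x₁ ∈ Icc a₁ b₁, ∀ x₂ ∈ Icc a₂ b₂, c ≤ e x₁ x₂)
    (hA₀ : ∀ x₁ ∈ ({a₁, b₁} : Set ℝ), ∀ x₂ ∈ Icc a₂ b₂, ∀ y ∈ Icc c (e x₁ x₂), A x₁ x₂ y = 0)
    (hB₀ : ∀ x₂ ∈ ({a₂, b₂} : Set ℝ), ∀ x₁ ∈ Icc a₁ b₁, ∀ y ∈ Icc c (e x₁ x₂), B x₁ x₂ y = 0) :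
    ∫ x₁ in a₁..b₁, ∫ x₂ in a₂..b₂, ∫ y in c..e x₁ x₂,
        (deriv (fun s => A s x₂ y) x₁ + deriv (fun s => B x₁ s y) x₂ + deriv (C x₁ x₂) y)
      = (∫ x₁ in a₁..b₁, ∫ x₂ in a₂..b₂,
          (C x₁ x₂ (e x₁ x₂) - (deriv (fun s => e s x₂) x₁ * A x₁ x₂ (e x₁ x₂)
            + deriv (e x₁) x₂ * B x₁ x₂ (e x₁ x₂))))
        - ∫ x₁ in a₁..b₁, ∫ x₂ in a₂..b₂, C x₁ x₂ c := by
  have ends_mem {a b s : ℝ} (hab : a ≤ b) (hs : s ∈ ({a, b} : Set ℝ)) : s ∈ Icc a b := by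
    rcases hs with rfl | rfl
    exacts [left_mem_Icc.2 hab, right_mem_Icc.2 hab]
  have no_flux₁ {x₁ : ℝ} (hx₁ : x₁ ∈ ({a₁, b₁} : Set ℝ)) :
      ∫ x₂ in a₂..b₂, ∫ y in c..e x₁ x₂, A x₁ x₂ y = 0 :=
    intervalIntegral_eq_zero_of_forall_Icc h₂ fun x₂ hx₂ =>
      intervalIntegral_eq_zero_of_forall_Icc (hce x₁ (ends_mem h₁ hx₁) x₂ hx₂) (hA₀ x₁ hx₁ x₂ hx₂)
  have no_flux₂ {x₂ : ℝ} (hx₂ : x₂ ∈ ({a₂, b₂} : Set ℝ)) :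
      ∫ x₁ in a₁..b₁, ∫ y in c..e x₁ x₂, B x₁ x₂ y = 0 :=
    intervalIntegral_eq_zero_of_forall_Icc h₁ fun x₁ hx₁ =>
      intervalIntegral_eq_zero_of_forall_Icc (hce x₁ hx₁ x₂ (ends_mem h₂ hx₂)) (hB₀ x₂ hx₂ x₁ hx₁)
  rw [integral_subgraph_divergence hA hB hC he, no_flux₁ (by simp), no_flux₁ (by simp),
    no_flux₂ (by simp), no_flux₂ (by simp)]
  ring

end DivergenceTheorem

section WaterWaves

/-- Irrotational, incompressible flow under the free surface `y = η(t,x)` of a tank with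
impermeable walls and flat bottom `y = -h`: the kinematic part of the water-wave system. The
potential `ϕ` is given as a `C²` function on all of space, harmonic only in the fluid. -/
structure IsFreeSurfaceFlow (L₁ L₂ h T : ℝ) (η : ℝ → ℝ → ℝ → ℝ)
    (ϕ : ℝ → ℝ → ℝ → ℝ → ℝ) : Prop where
  contDiff_eta : ContDiff ℝ 1 fun p : ℝ × ℝ × ℝ => η p.1 p.2.1 p.2.2
  contDiff_phi : ContDiff ℝ 2 fun p : ℝ × ℝ × ℝ × ℝ => ϕ p.1 p.2.1 p.2.2.1 p.2.2.2
  bottom_le_eta : ∀ t ∈ Icc 0 T, ∀ x₁ ∈ Icc 0 L₁, ∀ x₂ ∈ Icc 0 L₂, -h ≤ η t x₁ x₂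
  laplace : ∀ t ∈ Icc 0 T, ∀ x₁ ∈ Icc 0 L₁, ∀ x₂ ∈ Icc 0 L₂, ∀ y ∈ Icc (-h) (η t x₁ x₂),
    phiX1 (phiX1 ϕ) t x₁ x₂ y + phiX2 (phiX2 ϕ) t x₁ x₂ y + phiY3 (phiY3 ϕ) t x₁ x₂ y = 0
  wall_x1 : ∀ t ∈ Icc 0 T, ∀ x₁ ∈ ({0, L₁} : Set ℝ), ∀ x₂ ∈ Icc 0 L₂,
    ∀ y ∈ Icc (-h) (η t x₁ x₂), phiX1 ϕ t x₁ x₂ y = 0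
  wall_x2 : ∀ t ∈ Icc 0 T, ∀ x₂ ∈ ({0, L₂} : Set ℝ), ∀ x₁ ∈ Icc 0 L₁,
    ∀ y ∈ Icc (-h) (η t x₁ x₂), phiX2 ϕ t x₁ x₂ y = 0
  bottom : ∀ t ∈ Icc 0 T, ∀ x₁ ∈ Icc 0 L₁, ∀ x₂ ∈ Icc 0 L₂, phiY3 ϕ t x₁ x₂ (-h) = 0
  kinematic : ∀ t ∈ Icc 0 T, ∀ x₁ ∈ Icc 0 L₁, ∀ x₂ ∈ Icc 0 L₂,
    etaT3 η t x₁ x₂ = phiY3 ϕ t x₁ x₂ (η t x₁ x₂)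
      - (etaX1 η t x₁ x₂ * phiX1 ϕ t x₁ x₂ (η t x₁ x₂)
        + etaX2 η t x₁ x₂ * phiX2 ϕ t x₁ x₂ (η t x₁ x₂))

/-- A free surface flow subject to the Bernoulli condition: the dynamic part of the water-wave
system, expressing that the pressure is constant along the surface. -/
structure IsGravityWave (L₁ L₂ h g T : ℝ) (η : ℝ → ℝ → ℝ → ℝ) (ϕ : ℝ → ℝ → ℝ → ℝ → ℝ) : Prop
    extends IsFreeSurfaceFlow L₁ L₂ h T η ϕ where
  bernoulli : ∀ t ∈ Icc 0 T, ∀ x₁ ∈ Icc 0 L₁, ∀ x₂ ∈ Icc 0 L₂,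
    phiT3 ϕ t x₁ x₂ (η t x₁ x₂) + 1 / 2 * gradSq3 ϕ t x₁ x₂ (η t x₁ x₂) + g * η t x₁ x₂ = 0

variable {L₁ L₂ h g T t : ℝ} {η : ℝ → ℝ → ℝ → ℝ} {ϕ : ℝ → ℝ → ℝ → ℝ → ℝ}

lemma IsWW3D.isGravityWave (hsol : IsWW3D L₁ L₂ h g T η ϕ) (hh : 0 ≤ h) :
    IsGravityWave L₁ L₂ h g T η ϕ where
  contDiff_eta := mod_cast contDiff_infty.1 hsol.smooth_eta 1
  contDiff_phi := mod_cast contDiff_infty.1 hsol.smooth_phi 2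
  bottom_le_eta t ht x₁ hx₁ x₂ hx₂ := by linarith [hsol.eta_lower t ht x₁ hx₁ x₂ hx₂]
  laplace := hsol.laplace
  wall_x1 := hsol.bc_x1
  wall_x2 := hsol.bc_x2
  bottom := hsol.bc_bottom
  kinematic := hsol.kinematic
  bernoulli := hsol.bernoulli

namespace IsFreeSurfaceFlow

lemma integral_grad_mul_grad (hw : IsFreeSurfaceFlow L₁ L₂ h T η ϕ) (hL₁ : 0 ≤ L₁)
    (hL₂ : 0 ≤ L₂) (ht : t ∈ Icc 0 T) {f : ℝ → ℝ → ℝ → ℝ}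
    (hf : ContDiff ℝ 1 fun p : ℝ × ℝ × ℝ => f p.1 p.2.1 p.2.2) :
    ∫ x₁ in 0..L₁, ∫ x₂ in 0..L₂, ∫ y in (-h)..(η t x₁ x₂),
        (deriv (fun s => f s x₂ y) x₁ * phiX1 ϕ t x₁ x₂ y
          + deriv (fun s => f x₁ s y) x₂ * phiX2 ϕ t x₁ x₂ y
          + deriv (f x₁ x₂) y * phiY3 ϕ t x₁ x₂ y)
      = ∫ x₁ in 0..L₁, ∫ x₂ in 0..L₂, etaT3 η t x₁ x₂ * f x₁ x₂ (η t x₁ x₂) := by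
  have h₁₂ : (1 : WithTop ℕ∞) + 1 ≤ 2 := one_add_one_eq_two.le
  have hη := hw.contDiff_eta
  have hX1 := contDiff_phiX1 hw.contDiff_phi h₁₂
  have hX2 := contDiff_phiX2 hw.contDiff_phi h₁₂
  have hY := contDiff_phiY3 hw.contDiff_phi h₁₂
  have hfd := hf.differentiable one_ne_zero
  have divergence_thm := integral_subgraph_divergence_of_impermeable
    (A := fun x₁ x₂ y => f x₁ x₂ y * phiX1 ϕ t x₁ x₂ y)
    (B := fun x₁ x₂ y => f x₁ x₂ y * phiX2 ϕ t x₁ x₂ y)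
    (C := fun x₁ x₂ y => f x₁ x₂ y * phiY3 ϕ t x₁ x₂ y)
    (e := η t) (by fun_prop) (by fun_prop) (by fun_prop) (by fun_prop) hL₁ hL₂
    (hw.bottom_le_eta t ht)
    (fun x₁ hx₁ x₂ hx₂ y hy => by simp only [hw.wall_x1 t ht x₁ hx₁ x₂ hx₂ y hy, mul_zero])
    (fun x₂ hx₂ x₁ hx₁ y hy => by simp only [hw.wall_x2 t ht x₂ hx₂ x₁ hx₁ y hy, mul_zero])
  have bottom_flux : ∫ x₁ in 0..L₁, ∫ x₂ in 0..L₂, f x₁ x₂ (-h) * phiY3 ϕ t x₁ x₂ (-h) = 0 :=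
    intervalIntegral_eq_zero_of_forall_Icc hL₁ fun x₁ hx₁ =>
      intervalIntegral_eq_zero_of_forall_Icc hL₂ fun x₂ hx₂ => by
        rw [hw.bottom t ht x₁ hx₁ x₂ hx₂, mul_zero]
  rw [bottom_flux, sub_zero] at divergence_thm
  refine Eq.trans ?_ (divergence_thm.trans ?_)
  · refine integral_subgraph_congr hL₁ hL₂ (hw.bottom_le_eta t ht) fun x₁ hx₁ x₂ hx₂ y hy => ?_
    rw [divergence_mul_grad hfd hw.contDiff_phi]
    linear_combination (-f x₁ x₂ y) * hw.laplace t ht x₁ hx₁ x₂ hx₂ y hy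
  · refine intervalIntegral_intervalIntegral_congr_Icc hL₁ hL₂ fun x₁ hx₁ x₂ hx₂ => ?_
    rw [hw.kinematic t ht x₁ hx₁ x₂ hx₂]
    unfold etaX1 etaX2
    ring

lemma integral_gradSq3_eq (hw : IsFreeSurfaceFlow L₁ L₂ h T η ϕ) (hL₁ : 0 ≤ L₁)
    (hL₂ : 0 ≤ L₂) (ht : t ∈ Icc 0 T) :
    ∫ x₁ in 0..L₁, ∫ x₂ in 0..L₂, ∫ y in (-h)..(η t x₁ x₂), gradSq3 ϕ t x₁ x₂ y
      = ∫ x₁ in 0..L₁, ∫ x₂ in 0..L₂, etaT3 η t x₁ x₂ * psi3 η ϕ t x₁ x₂ := by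
  have hϕ := hw.contDiff_phi.of_le one_le_two
  refine Eq.trans ?_ (hw.integral_grad_mul_grad hL₁ hL₂ ht (f := ϕ t) (by fun_prop))
  simp only [gradSq3, phiX1, phiX2, phiY3, sq]

lemma hasDerivAt_integral_eta_mul_psi3 (hw : IsFreeSurfaceFlow L₁ L₂ h T η ϕ) (hL₁ : 0 ≤ L₁)
    (hL₂ : 0 ≤ L₂) (ht : t ∈ Icc 0 T) :
    HasDerivAt (fun s => ∫ x₁ in 0..L₁, ∫ x₂ in 0..L₂, η s x₁ x₂ * psi3 η ϕ s x₁ x₂)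
      ((∫ x₁ in 0..L₁, ∫ x₂ in 0..L₂, ∫ y in (-h)..(η t x₁ x₂), gradSq3 ϕ t x₁ x₂ y)
        + ∫ x₁ in 0..L₁, ∫ x₂ in 0..L₂, η t x₁ x₂ * psi3T η ϕ t x₁ x₂) t := by
  have hη := hw.contDiff_eta
  have hϕ := hw.contDiff_phi.of_le one_le_two
  have hηd := hη.differentiable one_ne_zero
  have hϕd := hϕ.differentiable one_ne_zero
  have hηt := contDiff_etaT3 (m := 0) hη (by simp)
  have hψ : Continuous fun p : ℝ × ℝ × ℝ => psi3 η ϕ p.1 p.2.1 p.2.2 := by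
    unfold psi3
    fun_prop
  have hψt := continuous_psi3T hη hϕ
  rw [hw.integral_gradSq3_eq hL₁ hL₂ ht,
    ← intervalIntegral_intervalIntegral_add (by fun_prop) (by fun_prop)]
  refine hasDerivAt_intervalIntegral_intervalIntegral
    (f := fun t x₁ x₂ => η t x₁ x₂ * psi3 η ϕ t x₁ x₂)
    (f' := fun t x₁ x₂ => etaT3 η t x₁ x₂ * psi3 η ϕ t x₁ x₂ + η t x₁ x₂ * psi3T η ϕ t x₁ x₂)
    (by fun_prop) (by fun_prop) (fun t x₁ x₂ => ?_) 0 L₁ 0 L₂ t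
  exact (hasDerivAt_etaT3 hηd t x₁ x₂).mul
    (hasDerivAt_psi3 hϕd hηd t x₁ x₂).differentiableAt.hasDerivAt

lemma integral_eta_mul_psi3_sub (hw : IsFreeSurfaceFlow L₁ L₂ h T η ϕ) (hL₁ : 0 ≤ L₁)
    (hL₂ : 0 ≤ L₂) (hT : 0 ≤ T) :
    (∫ x₁ in 0..L₁, ∫ x₂ in 0..L₂, η T x₁ x₂ * psi3 η ϕ T x₁ x₂)
        - ∫ x₁ in 0..L₁, ∫ x₂ in 0..L₂, η 0 x₁ x₂ * psi3 η ϕ 0 x₁ x₂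
      = (∫ t in 0..T, ∫ x₁ in 0..L₁, ∫ x₂ in 0..L₂, ∫ y in (-h)..(η t x₁ x₂),
          gradSq3 ϕ t x₁ x₂ y)
        + ∫ t in 0..T, ∫ x₁ in 0..L₁, ∫ x₂ in 0..L₂, η t x₁ x₂ * psi3T η ϕ t x₁ x₂ := by
  have hη := hw.contDiff_eta
  have hϕ := hw.contDiff_phi.of_le one_le_two
  have hψt := continuous_psi3T hη hϕ
  have hK := continuous_gradSq3 hϕ
  rw [← intervalIntegral.integral_add (Continuous.intervalIntegrable (by fun_prop) _ _)
      (Continuous.intervalIntegrable (by fun_prop) _ _),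
    intervalIntegral.integral_eq_sub_of_hasDerivAt
      (fun t ht => hw.hasDerivAt_integral_eta_mul_psi3 hL₁ hL₂ (by rwa [uIcc_of_le hT] at ht))
      (Continuous.intervalIntegrable (by fun_prop) _ _)]

lemma integral_phiY3_mul_etaX_dot_phiX (hw : IsFreeSurfaceFlow L₁ L₂ h T η ϕ) (hL₁ : 0 ≤ L₁)
    (hL₂ : 0 ≤ L₂) (ht : t ∈ Icc 0 T) :
    ∫ x₁ in 0..L₁, ∫ x₂ in 0..L₂, ∫ y in (-h)..(η t x₁ x₂),
        phiY3 ϕ t x₁ x₂ y * (etaX1 η t x₁ x₂ * phiX1 ϕ t x₁ x₂ y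
          + etaX2 η t x₁ x₂ * phiX2 ϕ t x₁ x₂ y)
      = (∫ x₁ in 0..L₁, ∫ x₂ in 0..L₂,
          η t x₁ x₂ * (etaT3 η t x₁ x₂ * phiY3 ϕ t x₁ x₂ (η t x₁ x₂)
            - 1 / 2 * gradSq3 ϕ t x₁ x₂ (η t x₁ x₂)))
        + 1 / 2 * ∫ x₁ in 0..L₁, ∫ x₂ in 0..L₂, η t x₁ x₂ * gradXSq3 ϕ t x₁ x₂ (-h) := by
  have h₁₂ : (1 : WithTop ℕ∞) + 1 ≤ 2 := one_add_one_eq_two.le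
  have hη := hw.contDiff_eta
  have hX1 := contDiff_phiX1 hw.contDiff_phi h₁₂
  have hX2 := contDiff_phiX2 hw.contDiff_phi h₁₂
  have hY := contDiff_phiY3 hw.contDiff_phi h₁₂
  have divergence_thm := integral_subgraph_divergence_of_impermeable
    (A := fun x₁ x₂ y => η t x₁ x₂ * (phiY3 ϕ t x₁ x₂ y * phiX1 ϕ t x₁ x₂ y))
    (B := fun x₁ x₂ y => η t x₁ x₂ * (phiY3 ϕ t x₁ x₂ y * phiX2 ϕ t x₁ x₂ y))
    (C := fun x₁ x₂ y => η t x₁ x₂ * (1 / 2 * (phiY3 ϕ t x₁ x₂ y ^ 2 - gradXSq3 ϕ t x₁ x₂ y)))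
    (e := η t) (by fun_prop) (by fun_prop) (by unfold gradXSq3; fun_prop) (by fun_prop) hL₁ hL₂
    (hw.bottom_le_eta t ht)
    (fun x₁ hx₁ x₂ hx₂ y hy => by simp only [hw.wall_x1 t ht x₁ hx₁ x₂ hx₂ y hy, mul_zero])
    (fun x₂ hx₂ x₁ hx₁ y hy => by simp only [hw.wall_x2 t ht x₂ hx₂ x₁ hx₁ y hy, mul_zero])
  have bottom_flux : ∫ x₁ in 0..L₁, ∫ x₂ in 0..L₂,
        η t x₁ x₂ * (1 / 2 * (phiY3 ϕ t x₁ x₂ (-h) ^ 2 - gradXSq3 ϕ t x₁ x₂ (-h)))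
      = -(1 / 2) * ∫ x₁ in 0..L₁, ∫ x₂ in 0..L₂, η t x₁ x₂ * gradXSq3 ϕ t x₁ x₂ (-h) := by
    simp only [← intervalIntegral.integral_const_mul]
    refine intervalIntegral_intervalIntegral_congr_Icc hL₁ hL₂ fun x₁ hx₁ x₂ hx₂ => ?_
    rw [hw.bottom t ht x₁ hx₁ x₂ hx₂]
    ring
  rw [bottom_flux, neg_mul, sub_neg_eq_add] at divergence_thm
  refine Eq.trans ?_ (divergence_thm.trans (congrArg (· + _) ?_))
  · refine integral_subgraph_congr hL₁ hL₂ (hw.bottom_le_eta t ht) fun x₁ hx₁ x₂ hx₂ y hy => ?_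
    rw [divergence_rellich_field (hη.differentiable one_ne_zero) hw.contDiff_phi,
      hw.laplace t ht x₁ hx₁ x₂ hx₂ y hy, mul_zero, add_zero]
  · refine intervalIntegral_intervalIntegral_congr_Icc hL₁ hL₂ fun x₁ hx₁ x₂ hx₂ => ?_
    rw [hw.kinematic t ht x₁ hx₁ x₂ hx₂]
    unfold etaX1 etaX2 gradSq3 gradXSq3
    ring

end IsFreeSurfaceFlow

namespace IsGravityWave

lemma hasDerivAt_energy3D (hw : IsGravityWave L₁ L₂ h g T η ϕ) (hL₁ : 0 ≤ L₁) (hL₂ : 0 ≤ L₂)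
    (ht : t ∈ Icc 0 T) : HasDerivAt (energy3D L₁ L₂ h g η ϕ) 0 t := by
  have h₁₂ : (1 : WithTop ℕ∞) + 1 ≤ 2 := one_add_one_eq_two.le
  have hη := hw.contDiff_eta
  have hϕ := hw.contDiff_phi.of_le one_le_two
  have hηd := hη.differentiable one_ne_zero
  have hηt := contDiff_etaT3 (m := 0) hη (by simp)
  have hϕt := contDiff_phiT3 hw.contDiff_phi h₁₂
  have hX1 := contDiff_phiX1 (m := 0) hϕ (by simp)
  have hX2 := contDiff_phiX2 (m := 0) hϕ (by simp)
  have hY := contDiff_phiY3 (m := 0) hϕ (by simp)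
  have hX1t := contDiff_phiX1 (m := 0) hϕt (by simp)
  have hX2t := contDiff_phiX2 (m := 0) hϕt (by simp)
  have hYt := contDiff_phiY3 (m := 0) hϕt (by simp)
  have hK := continuous_gradSq3 hϕ
  have potential := hasDerivAt_intervalIntegral_intervalIntegral
    (f := fun t x₁ x₂ => η t x₁ x₂ ^ 2)
    (f' := fun t x₁ x₂ => etaT3 η t x₁ x₂ * (2 * η t x₁ x₂)) (by fun_prop) (by fun_prop)
    (fun t x₁ x₂ => ((hasDerivAt_etaT3 hηd t x₁ x₂).pow 2).congr_deriv (by ring)) 0 L₁ 0 L₂ t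
  have kinetic := hasDerivAt_integral_subgraph hK (by fun_prop) hη.continuous (by fun_prop)
    (hasDerivAt_gradSq3 hw.contDiff_phi) (hasDerivAt_etaT3 hηd) 0 L₁ 0 L₂ (-h) t
  have green : ∫ x₁ in 0..L₁, ∫ x₂ in 0..L₂, ∫ y in (-h)..(η t x₁ x₂),
        (phiX1 (phiT3 ϕ) t x₁ x₂ y * phiX1 ϕ t x₁ x₂ y
          + phiX2 (phiT3 ϕ) t x₁ x₂ y * phiX2 ϕ t x₁ x₂ y
          + phiY3 (phiT3 ϕ) t x₁ x₂ y * phiY3 ϕ t x₁ x₂ y)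
      = ∫ x₁ in 0..L₁, ∫ x₂ in 0..L₂, etaT3 η t x₁ x₂ * phiT3 ϕ t x₁ x₂ (η t x₁ x₂) :=
    hw.integral_grad_mul_grad hL₁ hL₂ ht (f := phiT3 ϕ t) (by fun_prop)
  have power_balance : g / 2 * (∫ x₁ in 0..L₁, ∫ x₂ in 0..L₂, etaT3 η t x₁ x₂ * (2 * η t x₁ x₂))
      + (∫ x₁ in 0..L₁, ∫ x₂ in 0..L₂, etaT3 η t x₁ x₂ * phiT3 ϕ t x₁ x₂ (η t x₁ x₂))
      + 1 / 2 * (∫ x₁ in 0..L₁, ∫ x₂ in 0..L₂,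
          etaT3 η t x₁ x₂ * gradSq3 ϕ t x₁ x₂ (η t x₁ x₂)) = 0 := by
    simp only [← intervalIntegral.integral_const_mul]
    rw [← intervalIntegral_intervalIntegral_add (by fun_prop) (by fun_prop),
      ← intervalIntegral_intervalIntegral_add (by fun_prop) (by fun_prop)]
    refine intervalIntegral_eq_zero_of_forall_Icc hL₁ fun x₁ hx₁ =>
      intervalIntegral_eq_zero_of_forall_Icc hL₂ fun x₂ hx₂ => ?_
    linear_combination etaT3 η t x₁ x₂ * hw.bernoulli t ht x₁ hx₁ x₂ hx₂
  refine ((potential.const_mul (g / 2)).add (kinetic.const_mul (1 / 2))).congr_deriv ?_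
  simp only [intervalIntegral.integral_const_mul, smul_eq_mul] at power_balance ⊢
  linear_combination power_balance + green

lemma energy3D_eq (hw : IsGravityWave L₁ L₂ h g T η ϕ) (hL₁ : 0 ≤ L₁) (hL₂ : 0 ≤ L₂)
    (ht : t ∈ Icc 0 T) : energy3D L₁ L₂ h g η ϕ t = energy3D L₁ L₂ h g η ϕ 0 :=
  constant_of_has_deriv_right_zero
    (fun _ hs => (hw.hasDerivAt_energy3D hL₁ hL₂ hs).continuousAt.continuousWithinAt)
    (fun _ hs => (hw.hasDerivAt_energy3D hL₁ hL₂ (Ico_subset_Icc_self hs)).hasDerivWithinAt) t ht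

lemma integral_phiY3_mul_etaX_dot_phiX_eq_psi3T (hw : IsGravityWave L₁ L₂ h g T η ϕ)
    (hL₁ : 0 ≤ L₁) (hL₂ : 0 ≤ L₂) (ht : t ∈ Icc 0 T) :
    ∫ x₁ in 0..L₁, ∫ x₂ in 0..L₂, ∫ y in (-h)..(η t x₁ x₂),
        phiY3 ϕ t x₁ x₂ y * (etaX1 η t x₁ x₂ * phiX1 ϕ t x₁ x₂ y
          + etaX2 η t x₁ x₂ * phiX2 ϕ t x₁ x₂ y)
      = (∫ x₁ in 0..L₁, ∫ x₂ in 0..L₂, η t x₁ x₂ * psi3T η ϕ t x₁ x₂)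
        + g * (∫ x₁ in 0..L₁, ∫ x₂ in 0..L₂, η t x₁ x₂ ^ 2)
        + 1 / 2 * ∫ x₁ in 0..L₁, ∫ x₂ in 0..L₂, η t x₁ x₂ * gradXSq3 ϕ t x₁ x₂ (-h) := by
  have hη := hw.contDiff_eta
  have hϕ := hw.contDiff_phi.of_le one_le_two
  have hψt := continuous_psi3T hη hϕ
  rw [hw.integral_phiY3_mul_etaX_dot_phiX hL₁ hL₂ ht]
  congr 1
  simp only [← intervalIntegral.integral_const_mul]
  rw [← intervalIntegral_intervalIntegral_add (by fun_prop) (by fun_prop)]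
  refine intervalIntegral_intervalIntegral_congr_Icc hL₁ hL₂ fun x₁ hx₁ x₂ hx₂ => ?_
  rw [psi3T_eq (hϕ.differentiable one_ne_zero) (hη.differentiable one_ne_zero)]
  linear_combination (-η t x₁ x₂) * hw.bernoulli t ht x₁ hx₁ x₂ hx₂

lemma spacetimeIntegral_energy_density (hw : IsGravityWave L₁ L₂ h g T η ϕ) (hL₁ : 0 ≤ L₁)
    (hL₂ : 0 ≤ L₂) (hT : 0 ≤ T) :
    g / 2 * (∫ t in 0..T, ∫ x₁ in 0..L₁, ∫ x₂ in 0..L₂, η t x₁ x₂ ^ 2)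
        + 1 / 2 * (∫ t in 0..T, ∫ x₁ in 0..L₁, ∫ x₂ in 0..L₂, ∫ y in (-h)..(η t x₁ x₂),
          gradSq3 ϕ t x₁ x₂ y)
      = T * energy3D L₁ L₂ h g η ϕ 0 := by
  have hη := hw.contDiff_eta
  have hK := continuous_gradSq3 (hw.contDiff_phi.of_le one_le_two)
  calc _ = ∫ t in 0..T, energy3D L₁ L₂ h g η ϕ t := by
        unfold energy3D
        rw [intervalIntegral.integral_add (Continuous.intervalIntegrable (by fun_prop) _ _)
          (Continuous.intervalIntegrable (by fun_prop) _ _), intervalIntegral.integral_const_mul,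
          intervalIntegral.integral_const_mul]
    _ = ∫ _ in 0..T, energy3D L₁ L₂ h g η ϕ 0 :=
        intervalIntegral_congr_Icc hT fun t ht => hw.energy3D_eq hL₁ hL₂ ht
    _ = T * energy3D L₁ L₂ h g η ϕ 0 := by simp

lemma spacetimeIntegral_phiY3_mul_etaX_dot_phiX (hw : IsGravityWave L₁ L₂ h g T η ϕ)
    (hL₁ : 0 ≤ L₁) (hL₂ : 0 ≤ L₂) (hT : 0 ≤ T) :
    ∫ t in 0..T, ∫ x₁ in 0..L₁, ∫ x₂ in 0..L₂, ∫ y in (-h)..(η t x₁ x₂),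
        phiY3 ϕ t x₁ x₂ y * (etaX1 η t x₁ x₂ * phiX1 ϕ t x₁ x₂ y
          + etaX2 η t x₁ x₂ * phiX2 ϕ t x₁ x₂ y)
      = (∫ t in 0..T, ∫ x₁ in 0..L₁, ∫ x₂ in 0..L₂, η t x₁ x₂ * psi3T η ϕ t x₁ x₂)
        + g * (∫ t in 0..T, ∫ x₁ in 0..L₁, ∫ x₂ in 0..L₂, η t x₁ x₂ ^ 2)
        + 1 / 2 * ∫ t in 0..T, ∫ x₁ in 0..L₁, ∫ x₂ in 0..L₂,
            η t x₁ x₂ * gradXSq3 ϕ t x₁ x₂ (-h) := by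
  have hη := hw.contDiff_eta
  have hϕ := hw.contDiff_phi.of_le one_le_two
  have hψt := continuous_psi3T hη hϕ
  have hX := continuous_gradXSq3 hϕ
  rw [intervalIntegral_congr_Icc hT fun t ht =>
      hw.integral_phiY3_mul_etaX_dot_phiX_eq_psi3T hL₁ hL₂ ht,
    intervalIntegral.integral_add (Continuous.intervalIntegrable (by fun_prop) _ _)
      (Continuous.intervalIntegrable (by fun_prop) _ _),
    intervalIntegral.integral_add (Continuous.intervalIntegrable (by fun_prop) _ _)
      (Continuous.intervalIntegrable (by fun_prop) _ _),
    intervalIntegral.integral_const_mul, intervalIntegral.integral_const_mul]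

end IsGravityWave

theorem lemma_A_computation_3d_general (hL₁ : 0 ≤ L₁) (hL₂ : 0 ≤ L₂) (hT : 0 ≤ T)
    (hw : IsGravityWave L₁ L₂ h g T η ϕ) :
    3 * (∫ t in 0..T, ∫ x₁ in 0..L₁, ∫ x₂ in 0..L₂, η t x₁ x₂ * psi3T η ϕ t x₁ x₂)
      + 2 * g * (∫ t in 0..T, ∫ x₁ in 0..L₁, ∫ x₂ in 0..L₂, η t x₁ x₂ ^ 2)
      + 1 / 2 * (∫ t in 0..T, ∫ x₁ in 0..L₁, ∫ x₂ in 0..L₂, ∫ y in (-h)..(η t x₁ x₂),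
          gradSq3 ϕ t x₁ x₂ y)
      = -(T / 2) * energy3D L₁ L₂ h g η ϕ 0
        + 3 / 4 * ((∫ x₁ in 0..L₁, ∫ x₂ in 0..L₂, η T x₁ x₂ * psi3 η ϕ T x₁ x₂)
            - ∫ x₁ in 0..L₁, ∫ x₂ in 0..L₂, η 0 x₁ x₂ * psi3 η ϕ 0 x₁ x₂)
        - 9 / 8 * (∫ t in 0..T, ∫ x₁ in 0..L₁, ∫ x₂ in 0..L₂,
            η t x₁ x₂ * gradXSq3 ϕ t x₁ x₂ (-h))
        + 9 / 4 * ∫ t in 0..T, ∫ x₁ in 0..L₁, ∫ x₂ in 0..L₂, ∫ y in (-h)..(η t x₁ x₂),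
            phiY3 ϕ t x₁ x₂ y * (etaX1 η t x₁ x₂ * phiX1 ϕ t x₁ x₂ y
              + etaX2 η t x₁ x₂ * phiX2 ϕ t x₁ x₂ y) := by
  have energy := hw.spacetimeIntegral_energy_density hL₁ hL₂ hT
  have virial := hw.integral_eta_mul_psi3_sub hL₁ hL₂ hT
  have rellich := hw.spacetimeIntegral_phiY3_mul_etaX_dot_phiX hL₁ hL₂ hT
  linear_combination -(1 / 2) * energy - 3 / 4 * virial - 9 / 4 * rellich

end WaterWaves

/-- Lemma 4.7 (`d = 2`). -/
theorem lemma_A_computation_3d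
    (L₁ L₂ h g T : ℝ) (hL₁ : 0 < L₁) (hL₂ : 0 < L₂) (hh : 0 < h) (hg : 0 < g) (hT : 0 < T)
    (η : ℝ → ℝ → ℝ → ℝ) (ϕ : ℝ → ℝ → ℝ → ℝ → ℝ)
    (hsol : IsWW3D L₁ L₂ h g T η ϕ) :
    3 * (∫ t in (0:ℝ)..T, ∫ x₁ in (0:ℝ)..L₁, ∫ x₂ in (0:ℝ)..L₂,
          η t x₁ x₂ * psi3T η ϕ t x₁ x₂)
      + 2 * g * (∫ t in (0:ℝ)..T, ∫ x₁ in (0:ℝ)..L₁, ∫ x₂ in (0:ℝ)..L₂,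
          (η t x₁ x₂) ^ 2)
      + 1 / 2 * (∫ t in (0:ℝ)..T, ∫ x₁ in (0:ℝ)..L₁, ∫ x₂ in (0:ℝ)..L₂,
          ∫ y in (-h)..(η t x₁ x₂), gradSq3 ϕ t x₁ x₂ y)
      = -(T / 2) * energy3D L₁ L₂ h g η ϕ 0
        + 3 / 4 * ((∫ x₁ in (0:ℝ)..L₁, ∫ x₂ in (0:ℝ)..L₂, η T x₁ x₂ * psi3 η ϕ T x₁ x₂)
            - ∫ x₁ in (0:ℝ)..L₁, ∫ x₂ in (0:ℝ)..L₂, η 0 x₁ x₂ * psi3 η ϕ 0 x₁ x₂)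
        - 9 / 8 * (∫ t in (0:ℝ)..T, ∫ x₁ in (0:ℝ)..L₁, ∫ x₂ in (0:ℝ)..L₂,
            η t x₁ x₂ * gradXSq3 ϕ t x₁ x₂ (-h))
        + 9 / 4 * ∫ t in (0:ℝ)..T, ∫ x₁ in (0:ℝ)..L₁, ∫ x₂ in (0:ℝ)..L₂,
            ∫ y in (-h)..(η t x₁ x₂),
              phiY3 ϕ t x₁ x₂ y
                * (etaX1 η t x₁ x₂ * phiX1 ϕ t x₁ x₂ y
                    + etaX2 η t x₁ x₂ * phiX2 ϕ t x₁ x₂ y) :=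
  lemma_A_computation_3d_general hL₁.le hL₂.le hT.le (hsol.isGravityWave hh.le)
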